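/- arXiv:2306.03215 — 6 statements merged into one kernel-verified Lean document; each statement's English description precedes it below -/
import Mathlib

section
/- Fix n : ℕ, a level function c : Fin (n+1) → ℝ and v : ℝ. Let λ_{c,v} := {p : (Fin (n+1) → ℝ) × ℝ | ∀ i, (c i ≤ v → p.1 i ≤ p.2) ∧ (v ≤ c i → p.2 ≤ p.1 i)}. Then the image of λ_{c,v} under the projection π := Prod.fst equals {a : Fin (n+1) → ℝ | ∀ i j, c i ≤ v → v ≤ c j → a i ≤ a j}. -/
/-- The image, under the projection forgetting the auxiliary coordinate `x`, of the
scaffold cone with `x` inserted at level `v`, is the set of configurations respecting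
all comparisons through level `v`. -/
theorem proj_scaffold_cone (n : ℕ) (c : Fin (n + 1) → ℝ) (v : ℝ) :
    Prod.fst '' {p : (Fin (n + 1) → ℝ) × ℝ |
        ∀ i, (c i ≤ v → p.1 i ≤ p.2) ∧ (v ≤ c i → p.2 ≤ p.1 i)} =
      {a : Fin (n + 1) → ℝ | ∀ i j, c i ≤ v → v ≤ c j → a i ≤ a j} := by
  ext a
  constructor
  · rintro ⟨p, hp, rfl⟩ i j hi hj
    exact ((hp i).1 hi).trans ((hp j).2 hj)
  · intro h
    by_cases hne : ({i | c i ≤ v} : Set (Fin (n + 1))).Nonempty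
    -- The largest coordinate at level `≤ v` is a valid position for `x`.
    · obtain ⟨k, hk, hmax⟩ := Set.exists_max_image _ a (Set.toFinite _) hne
      exact ⟨(a, a k), fun i => ⟨hmax i, h k i hk⟩, rfl⟩
    -- With no label at level `≤ v`, any lower bound of the coordinates works.
    · obtain ⟨x, hx⟩ := (Set.finite_range a).bddBelow
      exact ⟨(a, x), fun i => ⟨fun hi => (hne ⟨i, hi⟩).elim,
        fun _ => hx (Set.mem_range_self i)⟩, rfl⟩
end

section
/- Fix n : ℕ and a level function c : Fin (n+1) → ℝ. Let σ_c := {a : Fin (n+1) → ℝ | ∀ i j, c i ≤ c j → a i ≤ a j}, and for v : ℝ let λ_{c,v} := {p : (Fin (n+1) → ℝ) × ℝ | ∀ i, (c i ≤ v → p.1 i ≤ p.2) ∧ (v ≤ c i → p.2 ≤ p.1 i)}. Then σ_c = ⋂_{v ∈ Set.range c} (Prod.fst '' λ_{c,v}); that is, every permutahedral cone is the intersection of the images under the projection of finitely many cones of the minimal tropical scaffold. -/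
/-- Every permutahedral cone is the intersection of the images, under the projection
forgetting the auxiliary coordinate, of finitely many cones of the minimal tropical
scaffold. -/
theorem permutahedral_cone_eq_iInter_proj_scaffold (n : ℕ) (c : Fin (n + 1) → ℝ) :
    {a : Fin (n + 1) → ℝ | ∀ i j, c i ≤ c j → a i ≤ a j} =
      ⋂ v ∈ Set.range c,
        Prod.fst '' {p : (Fin (n + 1) → ℝ) × ℝ |
          ∀ i, (c i ≤ v → p.1 i ≤ p.2) ∧ (v ≤ c i → p.2 ≤ p.1 i)} := by
  ext a
  simp only [Set.mem_iInter]
  constructor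
  · -- At level `c k`, the auxiliary point can be placed on top of the `k`-th point.
    rintro h _ ⟨k, rfl⟩
    exact ⟨(a, a k), fun i => ⟨h i k, h k i⟩, rfl⟩
  · -- At level `c j`, the auxiliary point `x` witnesses `a i ≤ x ≤ a j`.
    intro h i j hij
    obtain ⟨⟨_, x⟩, hx, rfl⟩ := h (c j) ⟨j, rfl⟩
    exact ((hx i).1 hij).trans ((hx j).2 le_rfl)
end

section
/- Fix n : ℕ and d : Fin (n+2) → ℝ. Let σ_d := {A : Fin (n+2) → ℝ | ∀ i j, d i ≤ d j → A i ≤ A j} and σ_{d ∘ Fin.castSucc} := {a : Fin (n+1) → ℝ | ∀ i j, d (Fin.castSucc i) ≤ d (Fin.castSucc j) → a i ≤ a j}. Then the image of σ_d under the map (Fin (n+2) → ℝ) → (Fin (n+1) → ℝ), A ↦ A ∘ Fin.castSucc, equals σ_{d ∘ Fin.castSucc}. -/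
/-!
Restricting a point of the cone clearly lands in the cone of the restricted preorder. Conversely,
a point `a` of the smaller cone lifts as soon as some real `x` satisfies `a i ≤ x` whenever label
`i` is at or below the last label and `x ≤ a j` whenever label `j` is at or above it. Transitivity
of the preorder makes every such lower bound at most every such upper bound, and both families are
finite, so `x` exists; it becomes the last coordinate.
-/

/-- Weak semistability of the projection `Σ_{n+1} → Σ_n`: forgetting the last coordinate
maps every permutahedral cone on `n+2` coordinates surjectively onto the permutahedral cone
on `n+1` coordinates given by the restricted preorder. -/
theorem proj_permutahedral_cone (n : ℕ) (d : Fin (n + 2) → ℝ) :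
    (fun A : Fin (n + 2) → ℝ => A ∘ Fin.castSucc) ''
        {A : Fin (n + 2) → ℝ | ∀ i j, d i ≤ d j → A i ≤ A j} =
      {a : Fin (n + 1) → ℝ |
        ∀ i j, d (Fin.castSucc i) ≤ d (Fin.castSucc j) → a i ≤ a j} := by
  ext a
  constructor
  · rintro ⟨A, hA, rfl⟩ i j hij
    exact hA _ _ hij
  · intro ha
    -- The last coordinate must lie above the `a i` at levels `≤ d (last)` and below those at
    -- levels `≥ d (last)`. The maximum of the former works; truncating the remaining
    -- coordinates to the global minimum `m` covers the case where there are none.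
    obtain ⟨m, hm⟩ : ∃ m, ∀ i, m ≤ a i :=
      ⟨Finset.univ.inf' Finset.univ_nonempty a, fun i => Finset.inf'_le a (Finset.mem_univ i)⟩
    let f : Fin (n + 1) → ℝ := fun i => if d i.castSucc ≤ d (Fin.last _) then a i else m
    let x : ℝ := Finset.univ.sup' Finset.univ_nonempty f
    have lower (i : Fin (n + 1)) (hi : d i.castSucc ≤ d (Fin.last _)) : a i ≤ x := by
      have h : f i ≤ x := Finset.le_sup' f (Finset.mem_univ i)
      simpa only [f, if_pos hi] using h
    have upper (j : Fin (n + 1)) (hj : d (Fin.last _) ≤ d j.castSucc) : x ≤ a j := by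
      refine Finset.sup'_le _ _ fun i _ => ?_
      by_cases hi : d i.castSucc ≤ d (Fin.last _)
      · simpa only [f, if_pos hi] using ha i j (hi.trans hj)
      · simpa only [f, if_neg hi] using hm j
    refine ⟨Fin.snoc (α := fun _ => ℝ) a x, ?_, ?_⟩
    · intro i j
      refine Fin.lastCases ?_ (fun i => ?_) i <;> refine Fin.lastCases ?_ (fun j => ?_) j <;>
        simp only [Fin.snoc_last, Fin.snoc_castSucc]
      · exact fun _ => le_rfl
      · exact upper j
      · exact lower i
      · exact ha i j
    · funext i
      simp
end

section
/- Fix n : ℕ and level functions c, c' : Fin (n+1) → ℝ. For v, w : ℝ define Λ^S_{v,w} := {q : ((Fin (n+1) → ℝ) × (Fin (n+1) → ℝ)) × (ℝ × ℝ) | (∀ i, (c i ≤ v → q.1.1 i ≤ q.2.1) ∧ (v ≤ c i → q.2.1 ≤ q.1.1 i)) ∧ (∀ i, (c' i ≤ w → q.1.2 i ≤ q.2.2) ∧ (w ≤ c' i → q.2.2 ≤ q.1.2 i))}. Then ⋂_{v ∈ Set.range c} ⋂_{w ∈ Set.range c'} (Prod.fst '' Λ^S_{v,w}) = (σ_c)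 ×ˢ (σ_{c'}), where σ_c := {a : Fin (n+1) → ℝ | ∀ i j, c i ≤ c j → a i ≤ a j} and σ_{c'} := {b : Fin (n+1) → ℝ | ∀ i j, c' i ≤ c' j → b i ≤ b j}. -/
/-- The configuration fan of the scaffold `Λ_S` is the square of the permutahedral fan:
every product of permutahedral cones is exactly the intersection of the projections of the
corresponding scaffold cones. -/
theorem iInter_proj_square_scaffold_eq_prod_permutahedral (n : ℕ)
    (c c' : Fin (n + 1) → ℝ) :
    (⋂ v ∈ Set.range c, ⋂ w ∈ Set.range c',
      Prod.fst '' {q : ((Fin (n + 1) → ℝ) × (Fin (n + 1) → ℝ)) × (ℝ × ℝ) |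
        (∀ i, (c i ≤ v → q.1.1 i ≤ q.2.1) ∧ (v ≤ c i → q.2.1 ≤ q.1.1 i)) ∧
        (∀ i, (c' i ≤ w → q.1.2 i ≤ q.2.2) ∧ (w ≤ c' i → q.2.2 ≤ q.1.2 i))}) =
      {a : Fin (n + 1) → ℝ | ∀ i j, c i ≤ c j → a i ≤ a j} ×ˢ
        {b : Fin (n + 1) → ℝ | ∀ i j, c' i ≤ c' j → b i ≤ b j} := by
  ext ⟨a, b⟩
  simp only [Set.mem_iInter, Set.forall_mem_range, Set.mem_prod, Set.mem_ofPred_eq]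
  constructor
  · intro h
    refine ⟨fun i j hij => ?_, fun i j hij => ?_⟩
    -- At level `c j` the auxiliary abscissa `x` is squeezed: `a i ≤ x ≤ a j`.
    -- The vertical level plays no role, so any index serves.
    · obtain ⟨⟨_, x, y⟩, ⟨hx, -⟩, rfl⟩ := h j 0
      exact ((hx i).1 hij).trans ((hx j).2 le_rfl)
    · obtain ⟨⟨_, x, y⟩, ⟨-, hy⟩, rfl⟩ := h 0 j
      exact ((hy i).1 hij).trans ((hy j).2 le_rfl)
  · rintro ⟨ha, hb⟩ k l
    -- The point `(a k, b l)` of the configuration grid serves as the auxiliary point.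
    exact ⟨((a, b), (a k, b l)), ⟨fun i => ⟨ha i k, ha k i⟩, fun i => ⟨hb i l, hb l i⟩⟩, rfl⟩
end

section
/- Fix n : ℕ, i : Fin (n+1), level functions c, c' : Fin (n+1) → ℝ, levels v, w : ℝ, and a sign ε : SignType. Define λ′ := {q : ((Fin (n+1) → ℝ) × (Fin (n+1) → ℝ)) × (ℝ × ℝ) | writing a := q.1.1, b := q.1.2, x := q.2.1, y := q.2.2: (∀ l, a i + b i ≤ a l + b l) ∧ (∀ j k, c j ≤ c k → a j ≤ a k) ∧ (∀ j k, c' j ≤ c' k → b j ≤ b k) ∧ (∀ l, (c l ≤ v → a l ≤ x) ∧ (v ≤ c l → x ≤ a l)) ∧ (∀ l, (c' l ≤ w → b l ≤ y) ∧ (w ≤ c' l → y ≤ b l)) ∧ (ε = 0 → x + y = a i + b i) ∧ (ε = 1 → a i + b i ≤ x + y) ∧ (ε = -1 → x + y ≤ a i + b i)}, and define σ′ := {r : (Fin (n+1) → ℝ) × (Fin (n+1) → ℝ) | writing a := r.1, b := r.2: (∀ l, a i + b i ≤ a l + b l) ∧ (∀ j k, c j ≤ c k → a j ≤ a k) ∧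 (∀ j k, c' j ≤ c' k → b j ≤ b k) ∧ (ε ≠ 1 → ∀ j k, c j ≤ v → c' k ≤ w → a j + b k ≤ a i + b i) ∧ (ε ≠ -1 → ∀ j k, v ≤ c j → w ≤ c' k → a i + b i ≤ a j + b k)}. Then Prod.fst '' λ′ = σ′. -/
/-!
The inclusion of the projection in `σ′` is transitivity through `(x, y)`. The converse is
Fourier–Motzkin elimination. Put `s = a i + b i`. Given `(a, b)` in `σ′`, all conditions on `x` and
`y` can be met provided `y` lies between the `b`'s below and above it and, in addition,
`s - a k ≤ y` for the `a k` above `x` (if `ε ≠ -1`) and `y ≤ s - a j` for the `a j` below `x`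
(if `ε ≠ 1`). A real number meets finitely many lower and upper bounds as soon as each lower bound
is at most each upper bound (`exists_between_finite`); for `y` these pairwise comparisons are the
monotonicity of `a` and `b` in the levels and the last two families of inequalities of `σ′`. With
`y` so chosen, the bounds on `x`, which are the `a`'s and `s - y`, are pairwise compatible too.
-/

/-- One-variable Fourier–Motzkin elimination: finitely many lower and upper bounds have a common
solution once they are pairwise compatible. Either set may be empty. -/
theorem exists_between_finite {L U : Set ℝ} (hL : L.Finite) (hU : U.Finite)
    (h : ∀ l ∈ L, ∀ u ∈ U, l ≤ u) : ∃ x, (∀ l ∈ L, l ≤ x) ∧ ∀ u ∈ U, x ≤ u := by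
  rcases L.eq_empty_or_nonempty with rfl | hne
  · obtain ⟨x, hx⟩ := hU.bddBelow
    exact ⟨x, by simp, fun u hu => hx hu⟩
  · obtain ⟨m, hm, hmax⟩ := hL.exists_maximalFor id L hne
    exact ⟨m, fun l hl => (le_total l m).elim id fun hml => hmax hl hml, h m hm⟩

/-- Weak semistability for the refined bipermutahedral scaffold: the projection of a cone
`λ′` of `Λ_B′` over the region `𝒞_i` to configuration space is exactly the corresponding
bipermutahedral cone `σ′`. -/
theorem proj_refined_bipermutahedral_scaffold_cone (n : ℕ) (i : Fin (n + 1))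
    (c c' : Fin (n + 1) → ℝ) (v w : ℝ) (ε : SignType) :
    Prod.fst '' {q : ((Fin (n + 1) → ℝ) × (Fin (n + 1) → ℝ)) × (ℝ × ℝ) |
        (∀ l, q.1.1 i + q.1.2 i ≤ q.1.1 l + q.1.2 l) ∧
        (∀ j k, c j ≤ c k → q.1.1 j ≤ q.1.1 k) ∧
        (∀ j k, c' j ≤ c' k → q.1.2 j ≤ q.1.2 k) ∧
        (∀ l, (c l ≤ v → q.1.1 l ≤ q.2.1) ∧ (v ≤ c l → q.2.1 ≤ q.1.1 l)) ∧
        (∀ l, (c' l ≤ w → q.1.2 l ≤ q.2.2) ∧ (w ≤ c' l → q.2.2 ≤ q.1.2 l)) ∧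
        (ε = 0 → q.2.1 + q.2.2 = q.1.1 i + q.1.2 i) ∧
        (ε = 1 → q.1.1 i + q.1.2 i ≤ q.2.1 + q.2.2) ∧
        (ε = -1 → q.2.1 + q.2.2 ≤ q.1.1 i + q.1.2 i)} =
      {r : (Fin (n + 1) → ℝ) × (Fin (n + 1) → ℝ) |
        (∀ l, r.1 i + r.2 i ≤ r.1 l + r.2 l) ∧
        (∀ j k, c j ≤ c k → r.1 j ≤ r.1 k) ∧
        (∀ j k, c' j ≤ c' k → r.2 j ≤ r.2 k) ∧
        (ε ≠ 1 → ∀ j k, c j ≤ v → c' k ≤ w → r.1 j + r.2 k ≤ r.1 i + r.2 i) ∧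
        (ε ≠ -1 → ∀ j k, v ≤ c j → w ≤ c' k → r.1 i + r.2 i ≤ r.1 j + r.2 k)} := by
  ext ⟨a, b⟩
  simp only [Set.mem_image, Set.mem_ofPred_eq, Prod.exists, exists_and_right, exists_eq_right]
  constructor
  · rintro ⟨x, y, hmin, ha, hb, hx, hy, h0, h1, h2⟩
    refine ⟨hmin, ha, hb, fun hε j k hj hk => ?_, fun hε j k hj hk => ?_⟩
    · have hs : x + y ≤ a i + b i := by
        cases ε
        · exact (h0 rfl).le
        · exact h2 rfl
        · exact absurd rfl hε
      linarith [(hx j).1 hj, (hy k).1 hk]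
    · have hs : a i + b i ≤ x + y := by
        cases ε
        · exact (h0 rfl).ge
        · exact absurd rfl hε
        · exact h1 rfl
      linarith [(hx j).2 hj, (hy k).2 hk]
  · rintro ⟨hmin, ha, hb, hle, hge⟩
    obtain ⟨y, hyL, hyU⟩ := exists_between_finite
      (L := b '' {k | c' k ≤ w} ∪ (fun k => a i + b i - a k) '' {k | ε ≠ -1 ∧ v ≤ c k})
      (U := b '' {k | w ≤ c' k} ∪ (fun k => a i + b i - a k) '' {k | ε ≠ 1 ∧ c k ≤ v})
      (Set.toFinite _) (Set.toFinite _) (by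
        rintro _ (⟨j, hj, rfl⟩ | ⟨j, ⟨hε, hj⟩, rfl⟩) _ (⟨k, hk, rfl⟩ | ⟨k, ⟨hε', hk⟩, rfl⟩)
        · exact hb j k (le_trans hj hk)
        · linarith [hle hε' k j hk hj]
        · linarith [hge hε j k hj hk]
        · linarith [ha k j (le_trans hk hj)])
    -- The bound `s - y` counts only for the relevant signs, hence the images of subsets of `Unit`.
    obtain ⟨x, hxL, hxU⟩ := exists_between_finite
      (L := a '' {k | c k ≤ v} ∪ (fun _ : Unit => a i + b i - y) '' {_u | ε ≠ -1})
      (U := a '' {k | v ≤ c k} ∪ (fun _ : Unit => a i + b i - y) '' {_u | ε ≠ 1})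
      (Set.toFinite _) (Set.toFinite _) (by
        rintro _ (⟨j, hj, rfl⟩ | ⟨_, hε, rfl⟩) _ (⟨k, hk, rfl⟩ | ⟨_, hε', rfl⟩)
        · exact ha j k (le_trans hj hk)
        · linarith [hyU _ (Or.inr ⟨j, ⟨hε', hj⟩, rfl⟩)]
        · linarith [hyL _ (Or.inr ⟨k, ⟨hε, hk⟩, rfl⟩)]
        · exact le_rfl)
    have hlow : ε ≠ -1 → a i + b i ≤ x + y := fun hε => by
      linarith [hxL _ (Or.inr ⟨(), hε, rfl⟩)]
    have hupp : ε ≠ 1 → x + y ≤ a i + b i := fun hε => by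
      linarith [hxU _ (Or.inr ⟨(), hε, rfl⟩)]
    refine ⟨x, y, hmin, ha, hb,
      fun l => ⟨fun h => hxL _ (Or.inl ⟨l, h, rfl⟩), fun h => hxU _ (Or.inl ⟨l, h, rfl⟩)⟩,
      fun l => ⟨fun h => hyL _ (Or.inl ⟨l, h, rfl⟩), fun h => hyU _ (Or.inl ⟨l, h, rfl⟩)⟩,
      ?_, ?_, ?_⟩
    · rintro rfl
      exact le_antisymm (hupp (by decide)) (hlow (by decide))
    · rintro rfl
      exact hlow (by decide)
    · rintro rfl
      exact hupp (by decide)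
end

section
/- Fix n : ℕ, i : Fin (n+1), level functions c, c' : Fin (n+1) → ℝ, a matrix g : Fin (n+1) → Fin (n+1) → ℝ and a threshold r : ℝ. Define σ_B := {q : (Fin (n+1) → ℝ) × (Fin (n+1) → ℝ) | writing a := q.1, b := q.2: (∀ l, a i + b i ≤ a l + b l) ∧ (∀ j k, c j ≤ c k → a j ≤ a k) ∧ (∀ j k, c' j ≤ c' k → b j ≤ b k) ∧ (∀ j k, g j k ≤ r → a i + b i ≤ a j + b k) ∧ (∀ j k, r ≤ g j k → a j + b k ≤ a i + b i)}. For j, k : Fin (n+1) define λ_{j,k} := {q : ((Fin (n+1) → ℝ) × (Fin (n+1) → ℝ)) × (ℝ × ℝ) | writing a := q.1.1, b := q.1.2, x := q.2.1, y := q.2.2: (∀ l, a i + b i ≤ a l + b l) ∧ (∀ l, (c l ≤ c j → a l ≤ x) ∧ (c j ≤ c l → x ≤ a l)) ∧ (∀ l, (c' l ≤ c' k → b l ≤ y) ∧ (c' k ≤ c' l → y ≤ b l)) ∧ (g j k ≤ r → a i + b i ≤ x + y) ∧ (r ≤ g j k → x + y ≤ a i + b i)}. Then σ_B = ⋂_{j}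 ⋂_{k} (Prod.fst '' λ_{j,k}). -/
/-!
The level conditions of the scaffold cone `λ_{j,k}` at `l = j` and `l = k` force `x = a j` and
`y = b k`, so each point of its projection has exactly one lift. Substituting this lift turns the
conditions of `λ_{j,k}` into those conditions of the bipermutahedral cone that involve `a j`, `b k`
or `a j + b k`; ranging over all `(j, k)` recovers all of them.
-/

/-- The refinement half of the identification of the configuration fan `Π_{Λ_B}` with the
bipermutahedral fan `Σ_{n,n}`: every cone of `Σ_{n,n}` is exactly the intersection, over
all pairs `(j, k)`, of the projections of the corresponding scaffold cones. -/
theorem bipermutahedral_cone_eq_iInter_proj_scaffold (n : ℕ) (i : Fin (n + 1))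
    (c c' : Fin (n + 1) → ℝ) (g : Fin (n + 1) → Fin (n + 1) → ℝ) (r : ℝ) :
    {q : (Fin (n + 1) → ℝ) × (Fin (n + 1) → ℝ) |
        (∀ l, q.1 i + q.2 i ≤ q.1 l + q.2 l) ∧
        (∀ j k, c j ≤ c k → q.1 j ≤ q.1 k) ∧
        (∀ j k, c' j ≤ c' k → q.2 j ≤ q.2 k) ∧
        (∀ j k, g j k ≤ r → q.1 i + q.2 i ≤ q.1 j + q.2 k) ∧
        (∀ j k, r ≤ g j k → q.1 j + q.2 k ≤ q.1 i + q.2 i)} =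
      ⋂ j : Fin (n + 1), ⋂ k : Fin (n + 1),
        Prod.fst '' {q : ((Fin (n + 1) → ℝ) × (Fin (n + 1) → ℝ)) × (ℝ × ℝ) |
          (∀ l, q.1.1 i + q.1.2 i ≤ q.1.1 l + q.1.2 l) ∧
          (∀ l, (c l ≤ c j → q.1.1 l ≤ q.2.1) ∧ (c j ≤ c l → q.2.1 ≤ q.1.1 l)) ∧
          (∀ l, (c' l ≤ c' k → q.1.2 l ≤ q.2.2) ∧ (c' k ≤ c' l → q.2.2 ≤ q.1.2 l)) ∧
          (g j k ≤ r → q.1.1 i + q.1.2 i ≤ q.2.1 + q.2.2) ∧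
          (r ≤ g j k → q.2.1 + q.2.2 ≤ q.1.1 i + q.1.2 i)} := by
  ext ⟨a, b⟩
  simp only [Set.mem_iInter, Set.mem_image, Set.mem_ofPred_eq]
  constructor
  · rintro ⟨hmin, ha, hb, hle, hge⟩ j k
    exact ⟨((a, b), (a j, b k)), ⟨hmin, fun l => ⟨ha l j, ha j l⟩, fun l => ⟨hb l k, hb k l⟩,
      hle j k, hge j k⟩, rfl⟩
  · intro h
    -- Taking `l = j` and `l = k` in the level conditions forces the fibre point to be `(a j, b k)`.
    have key : ∀ j k, (∀ l, a i + b i ≤ a l + b l) ∧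
        (∀ l, c j ≤ c l → a j ≤ a l) ∧ (∀ l, c' k ≤ c' l → b k ≤ b l) ∧
        (g j k ≤ r → a i + b i ≤ a j + b k) ∧ (r ≤ g j k → a j + b k ≤ a i + b i) := by
      intro j k
      obtain ⟨⟨⟨a', b'⟩, x, y⟩, ⟨hmin, hx, hy, hle, hge⟩, heq⟩ := h j k
      obtain ⟨rfl, rfl⟩ := Prod.mk.inj heq
      obtain rfl : x = a' j := le_antisymm ((hx j).2 le_rfl) ((hx j).1 le_rfl)
      obtain rfl : y = b' k := le_antisymm ((hy k).2 le_rfl) ((hy k).1 le_rfl)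
      exact ⟨hmin, fun l => (hx l).2, fun l => (hy l).2, hle, hge⟩
    exact ⟨(key i i).1, fun j => (key j i).2.1, fun k => (key i k).2.2.1,
      fun j k => (key j k).2.2.2.1, fun j k => (key j k).2.2.2.2⟩
end
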